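/- If X is a continuum, M a countable elementary submodel of H(κ) with X ∈ M, and L = 2^X ∩ M, then X is hereditarily indecomposable if and only if the Wallman space wL is hereditarily indecomposable. -/

import Mathlib

open Set TopologicalSpace FirstOrder

universe u v

/-- An ultrafilter on a lattice `F` of subsets of `α` (in the Wallman sense): a proper filter
on `F` such that every member of `F` meeting all members of the filter belongs to it. -/
structure LUltra {α : Type u} (F : Set (Set α)) where
  sets : Set (Set α)
  sets_subset : sets ⊆ F
  univ_mem : Set.univ ∈ sets
  empty_notMem : ∅ ∉ sets
  inter_mem : ∀ a ∈ sets, ∀ b ∈ sets, a ∩ b ∈ sets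
  superset_mem : ∀ a ∈ sets, ∀ b ∈ F, a ⊆ b → b ∈ sets
  ultra : ∀ a ∈ F, a ∉ sets → ∃ b ∈ sets, a ∩ b = ∅

/-- The Wallman topology: the sets `â = {u : a ∈ u}`, `a ∈ F`, form a base for closed sets. -/
instance LUltra.instTopologicalSpace {α : Type u} (F : Set (Set α)) :
    TopologicalSpace (LUltra F) :=
  TopologicalSpace.generateFrom {s | ∃ a ∈ F, s = {u : LUltra F | a ∈ u.sets}ᶜ}

/-- `X` is hereditarily indecomposable: any two subcontinua are comparable or disjoint. -/
def HereditarilyIndecomposable (X : Type u) [TopologicalSpace X] : Prop :=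
  ∀ A B : Set X, IsClosed A → IsConnected A → IsClosed B → IsConnected B →
    A ⊆ B ∨ B ⊆ A ∨ A ∩ B = ∅

/-- `x ∈ H(κ)`: `x` hereditarily has cardinality `< κ` (for regular `κ` this agrees with
`|TC(x)| < κ`). -/
def HeredLt (κ : Cardinal.{1}) (x : ZFSet.{0}) : Prop :=
  ZFSet.mem_wf.fix (fun x ih => Cardinal.mk x.toSet < κ ∧ ∀ y, ∀ h : y ∈ x, ih y h) x

/-- `ZFSet` as a structure for the language with one binary relation, interpreted as `∈`. -/
instance ZFSet.memLangStructure : FirstOrder.Language.graph.Structure ZFSet.{0} where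
  funMap := fun {_} f => isEmptyElim f
  RelMap := fun {_} r => match r with | .adj => fun x => x 0 ∈ x 1

/-- `H(κ)` as a substructure of the universe of sets with membership. -/
def HKappa (κ : Cardinal.{1}) : FirstOrder.Language.graph.Substructure ZFSet.{0} where
  carrier := {x | HeredLt κ x}
  fun_mem := fun {_} f => isEmptyElim f

/-- `z` belongs to the elementary submodel `M ≺ H(κ)`. -/
def MemOf (κ : Cardinal.{1})
    (M : FirstOrder.Language.graph.ElementarySubstructure (HKappa κ))
    (z : ZFSet.{0}) : Prop :=
  ∃ h : z ∈ HKappa κ, (⟨z, h⟩ : HKappa κ) ∈ M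

/-- The ZF-set coding a subset `A` of (the extension of) the ZF-set `X`. -/
noncomputable def codeSet (X : ZFSet.{0}) (A : Set ↥X.toSet) : ZFSet.{0} :=
  ZFSet.sep (fun y => ∃ h : y ∈ X.toSet, (⟨y, h⟩ : ↥X.toSet) ∈ A) X

/-- The subset of `X` decoded from a ZF-set `t`. -/
def decodeSet (X : ZFSet.{0}) (t : ZFSet.{0}) : Set ↥X.toSet :=
  {p : ↥X.toSet | (p : ZFSet) ∈ t}

/-- The ZF-set coding the topology of the space `X`: the set of codes of open subsets. -/
noncomputable def opensZ (X : ZFSet.{0}) [TopologicalSpace ↥X.toSet] : ZFSet.{0} :=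
  ZFSet.sep (fun t => IsOpen (decodeSet X t)) X.powerset

/-- The lattice `L = 2^X ∩ M`: the closed subsets of `X` whose codes belong to `M`. -/
def Lfam (X : ZFSet.{0}) [TopologicalSpace ↥X.toSet] (κ : Cardinal.{1})
    (M : FirstOrder.Language.graph.ElementarySubstructure (HKappa κ)) :
    Set (Set ↥X.toSet) :=
  {A | IsClosed A ∧ MemOf κ M (codeSet X A)}

/-!
Krasinkiewicz and Minc: a compact Hausdorff space is hereditarily indecomposable iff its family
of closed sets is crooked, i.e. whenever closed sets `C`, `D`, `F`, `G` satisfy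
`C ∩ D = C ∩ F = D ∩ G = ∅`, the space can be folded into three closed layers leading from `C`
to `D`. Crookedness is a first-order property of the lattice of closed sets, and by swelling closed
sets into a base it can be tested on any base closed under finite intersections. Hence the
Wallman space `wL` is hereditarily indecomposable iff its base `L` is crooked, because a pointwise
Boolean condition on finitely many members of `L` holds at every point of `X` iff it holds at every
point of `wL`. On the other side, `L` is crooked iff the full lattice of closed subsets of `X` is,
because `M ≺ H(κ)` and every closed subset of `X` has a code in `H(κ)`.
-/

section Crooked

variable {Y : Type*}

/-- The hypothesis of the Krasinkiewicz–Minc characterization of hereditary indecomposability: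
`C` and `D` are disjoint, `F` avoids `C` and `G` avoids `D`. -/
structure IsPliandFoursome (C D F G : Set Y) : Prop where
  disjoint_left_right : Disjoint C D
  disjoint_left : Disjoint C F
  disjoint_right : Disjoint D G

/-- The conclusion of the Krasinkiewicz–Minc characterization: the space is covered by three
layers `P`, `R`, `Q`, from `C` to `D`, such that `P` and `R` meet only outside `G` and
`R` and `Q` meet only outside `F`. -/
structure IsChicane (C D F G P R Q : Set Y) : Prop where
  left_subset : C ⊆ P
  right_subset : D ⊆ Q
  disjoint : Disjoint P Q
  disjoint_left : Disjoint (P ∩ R) G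
  disjoint_right : Disjoint (R ∩ Q) F
  cover : P ∪ R ∪ Q = univ

/-- A family of sets is crooked if each pliand foursome of members has a chicane of members. -/
def IsCrooked (B : Set (Set Y)) : Prop :=
  ∀ ⦃C⦄, C ∈ B → ∀ ⦃D⦄, D ∈ B → ∀ ⦃F⦄, F ∈ B → ∀ ⦃G⦄, G ∈ B → IsPliandFoursome C D F G →
    ∃ P ∈ B, ∃ R ∈ B, ∃ Q ∈ B, IsChicane C D F G P R Q

theorem IsChicane.symm {C D F G P R Q : Set Y} (h : IsChicane C D F G P R Q) :
    IsChicane D C G F Q R P where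
  left_subset := h.right_subset
  right_subset := h.left_subset
  disjoint := h.disjoint.symm
  disjoint_left := inter_comm R Q ▸ h.disjoint_right
  disjoint_right := inter_comm P R ▸ h.disjoint_left
  cover := by rw [← h.cover]; ac_rfl

/-- The condition on the memberships of a point in four sets that defines pliand foursomes. -/
def PliandPattern (p : Fin 4 → Prop) : Prop :=
  ¬(p 0 ∧ p 1) ∧ ¬(p 0 ∧ p 2) ∧ ¬(p 1 ∧ p 3)

/-- The condition on the memberships of a point in four plus three sets that defines chicanes. -/
def ChicanePattern (p : Fin 4 → Prop) (q : Fin 3 → Prop) : Prop :=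
  (p 0 → q 0) ∧ (p 1 → q 2) ∧ ¬(q 0 ∧ q 2) ∧ ¬((q 0 ∧ q 1) ∧ p 3) ∧ ¬((q 1 ∧ q 2) ∧ p 2) ∧
    ((q 0 ∨ q 1) ∨ q 2)

theorem isPliandFoursome_iff_forall (a : Fin 4 → Set Y) :
    IsPliandFoursome (a 0) (a 1) (a 2) (a 3) ↔ ∀ x, PliandPattern fun i => x ∈ a i := by
  simp only [PliandPattern, forall_and]
  exact ⟨fun ⟨h₁, h₂, h₃⟩ => by simp_all [Set.disjoint_left],
    fun ⟨h₁, h₂, h₃⟩ => by constructor <;> simp_all [Set.disjoint_left]⟩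

theorem isChicane_iff_forall (a : Fin 4 → Set Y) (b : Fin 3 → Set Y) :
    IsChicane (a 0) (a 1) (a 2) (a 3) (b 0) (b 1) (b 2) ↔
      ∀ x, ChicanePattern (fun i => x ∈ a i) fun j => x ∈ b j := by
  simp only [ChicanePattern, forall_and]
  constructor
  · rintro ⟨h₁, h₂, h₃, h₄, h₅, h₆⟩
    simp_all [Set.disjoint_left, Set.ext_iff, subset_def]
  · rintro ⟨h₁, h₂, h₃, h₄, h₅, h₆⟩
    constructor <;> simp_all [Set.disjoint_left, Set.ext_iff, subset_def]

theorem isCrooked_iff_forall_pattern (B : Set (Set Y)) :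
    IsCrooked B ↔ ∀ a : Fin 4 → Set Y, (∀ i, a i ∈ B) → (∀ x, PliandPattern fun i => x ∈ a i) →
      ∃ b : Fin 3 → Set Y, (∀ j, b j ∈ B) ∧
        ∀ x, ChicanePattern (fun i => x ∈ a i) fun j => x ∈ b j := by
  constructor
  · intro h a ha hp
    obtain ⟨P, hP, R, hR, Q, hQ, hchic⟩ :=
      h (ha 0) (ha 1) (ha 2) (ha 3) ((isPliandFoursome_iff_forall a).2 hp)
    exact ⟨![P, R, Q], by simp [Fin.forall_fin_succ, hP, hR, hQ],
      (isChicane_iff_forall a ![P, R, Q]).1 hchic⟩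
  · intro h C hC D hD F hF G hG hp
    obtain ⟨b, hb, hchic⟩ := h ![C, D, F, G] (by simp [Fin.forall_fin_succ, hC, hD, hF, hG])
      ((isPliandFoursome_iff_forall ![C, D, F, G]).1 hp)
    exact ⟨b 0, hb 0, b 1, hb 1, b 2, hb 2, (isChicane_iff_forall ![C, D, F, G] b).2 hchic⟩

end Crooked

section Components

variable {Y : Type*} [TopologicalSpace Y]

/-- The union of the components of the subspace `F` that meet `D`. -/
def componentsMeeting (F D : Set Y) : Set Y :=
  ⋃ x ∈ D, connectedComponentIn F x

theorem componentsMeeting_eq_image (F D : Set Y) :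
    componentsMeeting F D = (↑) '' ⋃ x ∈ ((↑) ⁻¹' D : Set F), connectedComponent x := by
  ext y
  simp only [componentsMeeting, mem_iUnion, image_iUnion, mem_preimage, exists_prop]
  constructor
  · rintro ⟨x, hxD, hy⟩
    have hxF : x ∈ F := connectedComponentIn_nonempty_iff.1 ⟨y, hy⟩
    exact ⟨⟨x, hxF⟩, hxD, connectedComponentIn_eq_image hxF ▸ hy⟩
  · rintro ⟨x, hxD, hy⟩
    exact ⟨x, hxD, connectedComponentIn_eq_image x.2 ▸ hy⟩

theorem isClosed_connectedComponentIn {F : Set Y} (hF : IsClosed F) (x : Y) :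
    IsClosed (connectedComponentIn F x) := by
  by_cases hx : x ∈ F
  · rw [connectedComponentIn_eq_image hx]
    exact hF.isClosedMap_subtype_val _ isClosed_connectedComponent
  · rw [connectedComponentIn_eq_empty hx]
    exact isClosed_empty

variable [CompactSpace Y] [T2Space Y]

theorem isClosed_biUnion_connectedComponent {A : Set Y} (hA : IsClosed A) :
    IsClosed (⋃ x ∈ A, connectedComponent x) := by
  rw [← connectedComponents_preimage_image]
  exact ((hA.isCompact.image ConnectedComponents.continuous_coe).isClosed).preimage
    ConnectedComponents.continuous_coe

theorem isClosed_componentsMeeting {F D : Set Y} (hF : IsClosed F) (hD : IsClosed D) :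
    IsClosed (componentsMeeting F D) := by
  have : CompactSpace F := isCompact_iff_compactSpace.1 hF.isCompact
  rw [componentsMeeting_eq_image]
  exact hF.isClosedMap_subtype_val _
    (isClosed_biUnion_connectedComponent (hD.preimage continuous_subtype_val))

theorem exists_isClopen_of_disjoint_biUnion_connectedComponent {A E : Set Y} (hA : IsClosed A)
    (hE : IsClosed E) (h : Disjoint (⋃ x ∈ A, connectedComponent x) E) :
    ∃ Z, IsClopen Z ∧ A ⊆ Z ∧ Disjoint Z E := by
  let π : Y → ConnectedComponents Y := (↑)
  have hπ : Continuous π := ConnectedComponents.continuous_coe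
  have hdisj : Disjoint (π '' A) (π '' E) := by
    rwa [Set.disjoint_image_right, connectedComponents_preimage_image]
  obtain ⟨Z, hZ, hAZ, hZE⟩ := exists_clopen_of_closed_subset_open
    (hA.isCompact.image hπ).isClosed (hE.isCompact.image hπ).isClosed.isOpen_compl
    (subset_compl_iff_disjoint_right.2 hdisj)
  exact ⟨π ⁻¹' Z, hZ.preimage hπ, image_subset_iff.1 hAZ,
    Set.disjoint_image_right.1 (subset_compl_iff_disjoint_right.1 hZE)⟩

theorem exists_isClosed_diff_of_disjoint_componentsMeeting {G A E : Set Y} (hG : IsClosed G)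
    (hA : IsClosed A) (hE : IsClosed E) (h : Disjoint (componentsMeeting G A) E) :
    ∃ P, IsClosed P ∧ IsClosed (G \ P) ∧ A ∩ G ⊆ P ∧ Disjoint P E := by
  have : CompactSpace G := isCompact_iff_compactSpace.1 hG.isCompact
  rw [componentsMeeting_eq_image, Set.disjoint_image_left] at h
  obtain ⟨Z, hZ, hAZ, hZE⟩ := exists_isClopen_of_disjoint_biUnion_connectedComponent
    (hA.preimage continuous_subtype_val) (hE.preimage continuous_subtype_val) h
  refine ⟨(↑) '' Z, hG.isClosedMap_subtype_val _ hZ.1, ?_, ?_, Set.disjoint_image_left.2 hZE⟩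
  · rw [← image_val_compl]
    exact hG.isClosedMap_subtype_val _ hZ.compl.1
  · rintro x ⟨hxA, hxG⟩
    exact ⟨⟨x, hxG⟩, hAZ hxA, rfl⟩

end Components

section HereditarilyIndecomposable

variable {Y : Type*} [TopologicalSpace Y]

theorem inter_closure_compl_subset {V P : Set Y} (hP : IsClosed (Vᶜ \ P)) :
    P ∩ closure Pᶜ ⊆ closure V := by
  have hcover : Pᶜ ⊆ V ∪ Vᶜ \ P := fun x hx => by
    by_cases hxV : x ∈ V
    exacts [Or.inl hxV, Or.inr ⟨hxV, hx⟩]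
  rintro x ⟨hxP, hx⟩
  have hx' := closure_mono hcover hx
  rw [closure_union, hP.closure_eq] at hx'
  exact hx'.resolve_right fun h => h.2 hxP

/-- The component of a point of `C` in `Vᶜ` and that of a point of `D` in `Uᶜ` are incomparable,
since the first one meets `U` and the second one meets `V`. -/
theorem HereditarilyIndecomposable.disjoint_componentsMeeting (hY : HereditarilyIndecomposable Y)
    {C D U V : Set Y} (hU : IsOpen U) (hV : IsOpen V) (hCU : C ⊆ U) (hDV : D ⊆ V) :
    Disjoint (componentsMeeting Vᶜ C) (componentsMeeting Uᶜ D) := by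
  simp only [componentsMeeting, disjoint_iUnion_left, disjoint_iUnion_right]
  intro d hd c hc
  by_contra hmeet
  obtain ⟨x, hxc, hxd⟩ := Set.not_disjoint_iff.1 hmeet
  have hcV : c ∈ Vᶜ := connectedComponentIn_nonempty_iff.1 ⟨x, hxc⟩
  have hdU : d ∈ Uᶜ := connectedComponentIn_nonempty_iff.1 ⟨x, hxd⟩
  rcases hY _ _ (isClosed_connectedComponentIn hV.isClosed_compl c)
    (isConnected_connectedComponentIn_iff.2 hcV) (isClosed_connectedComponentIn hU.isClosed_compl d)
    (isConnected_connectedComponentIn_iff.2 hdU) with h | h | h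
  · exact connectedComponentIn_subset _ _ (h (mem_connectedComponentIn hcV)) (hCU hc)
  · exact connectedComponentIn_subset _ _ (h (mem_connectedComponentIn hdU)) (hDV hd)
  · exact hmeet (Set.disjoint_iff_inter_eq_empty.2 h)

theorem HereditarilyIndecomposable.isCrooked [CompactSpace Y] [T2Space Y]
    (hY : HereditarilyIndecomposable Y) : IsCrooked {A : Set Y | IsClosed A} := by
  intro C hC D hD F hF G hG ⟨hCD, hCF, hDG⟩
  obtain ⟨U, hU, hCU, hUDF⟩ := normal_exists_closure_subset hC (hD.union hF).isOpen_compl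
    (subset_compl_iff_disjoint_right.2 (hCD.union_right hCF))
  obtain ⟨V, hV, hDV, hVCG⟩ := normal_exists_closure_subset hD (hC.union hG).isOpen_compl
    (subset_compl_iff_disjoint_right.2 (hCD.symm.union_right hDG))
  have hDU : D ⊆ Uᶜ := fun x hx hxU => hUDF (subset_closure hxU) (Or.inl hx)
  have hCV : C ⊆ Vᶜ := fun x hx hxV => hVCG (subset_closure hxV) (Or.inl hx)
  obtain ⟨P, hP, hVP, hCP, hPD⟩ := exists_isClosed_diff_of_disjoint_componentsMeeting
    hV.isClosed_compl hC (isClosed_componentsMeeting hU.isClosed_compl hD)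
    (hY.disjoint_componentsMeeting hU hV hCU hDV)
  obtain ⟨Q, hQ, hUQ, hDQ, hQP⟩ := exists_isClosed_diff_of_disjoint_componentsMeeting
    hU.isClosed_compl hD hP hPD.symm
  refine ⟨P, hP, closure (P ∪ Q)ᶜ, isClosed_closure, Q, hQ, fun x hx => hCP ⟨hx, hCV hx⟩,
    fun x hx => hDQ ⟨hx, hDU hx⟩, hQP.symm, Set.disjoint_left.2 ?_, Set.disjoint_left.2 ?_, ?_⟩
  · rintro x ⟨hxP, hxR⟩ hxG
    refine hVCG (inter_closure_compl_subset hVP ⟨hxP, closure_mono ?_ hxR⟩) (Or.inr hxG)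
    exact compl_subset_compl.2 subset_union_left
  · rintro x ⟨hxR, hxQ⟩ hxF
    refine hUDF (inter_closure_compl_subset hUQ ⟨hxQ, closure_mono ?_ hxR⟩) (Or.inr hxF)
    exact compl_subset_compl.2 subset_union_right
  · rw [union_right_comm]
    exact eq_univ_of_univ_subset
      ((union_compl_self (P ∪ Q)).symm.subset.trans (union_subset_union_right _ subset_closure))

theorem IsChicane.subset_of_isPreconnected {A C D F P R Q : Set Y}
    (h : IsChicane C D F A P R Q) (hA : IsPreconnected A) (hP : IsClosed P)
    (hR : IsClosed R) (hQ : IsClosed Q) (hAC : (A ∩ C).Nonempty) : A ⊆ P := by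
  obtain ⟨x, hxA, hxC⟩ := hAC
  have hdisj : Disjoint (A ∩ P) (R ∪ Q) := by
    have h₁ := h.disjoint
    have h₂ := h.disjoint_left
    simp only [Set.disjoint_left, mem_inter_iff, mem_union] at *
    grind
  have hcover : A ⊆ P ∪ (R ∪ Q) := by simp [← union_assoc, h.cover]
  rcases isPreconnected_iff_subset_of_disjoint_closed.1 hA P (R ∪ Q) hP (hR.union hQ) hcover
    (by rw [← inter_assoc]; exact hdisj.inter_eq) with hAP | hARQ
  · exact hAP
  · exact absurd (hARQ hxA) (Set.disjoint_left.1 hdisj ⟨hxA, h.left_subset hxC⟩)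

theorem IsCrooked.hereditarilyIndecomposable [T1Space Y]
    (hY : IsCrooked {A : Set Y | IsClosed A}) : HereditarilyIndecomposable Y := by
  intro A B hA hAc hB hBc
  by_contra! hcon
  obtain ⟨hAB, hBA, x, hxA, hxB⟩ := hcon
  obtain ⟨a, haA, haB⟩ := not_subset.1 hAB
  obtain ⟨b, hbB, hbA⟩ := not_subset.1 hBA
  obtain ⟨P, hP, R, hR, Q, hQ, hchic⟩ := hY (isClosed_singleton (x := a))
    (isClosed_singleton (x := b)) hB hA
    ⟨disjoint_singleton.2 (ne_of_mem_of_not_mem haA hbA), disjoint_singleton_left.2 haB,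
      disjoint_singleton_left.2 hbA⟩
  exact Set.disjoint_left.1 hchic.disjoint
    (hchic.subset_of_isPreconnected hAc.isPreconnected hP hR hQ ⟨a, haA, rfl⟩ hxA)
    (hchic.symm.subset_of_isPreconnected hBc.isPreconnected hQ hR hP ⟨b, hbB, rfl⟩ hxB)

theorem hereditarilyIndecomposable_iff_isCrooked [CompactSpace Y] [T2Space Y] :
    HereditarilyIndecomposable Y ↔ IsCrooked {A : Set Y | IsClosed A} :=
  ⟨HereditarilyIndecomposable.isCrooked, IsCrooked.hereditarilyIndecomposable⟩

end HereditarilyIndecomposable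

section ClosedBase

variable {Y : Type*} [TopologicalSpace Y]

/-- A base for the closed sets of a space that is stable under finite intersections. -/
structure IsClosedBase (B : Set (Set Y)) : Prop where
  isClosed : ∀ b ∈ B, IsClosed b
  univ_mem : univ ∈ B
  inter_mem : ∀ a ∈ B, ∀ b ∈ B, a ∩ b ∈ B
  exists_superset_notMem : ∀ K, IsClosed K → ∀ x ∉ K, ∃ b ∈ B, K ⊆ b ∧ x ∉ b

variable [CompactSpace Y] {B : Set (Set Y)}

theorem IsClosedBase.exists_superset_disjoint (hB : IsClosedBase B) {K E : Set Y}
    (hK : IsClosed K) (hE : IsClosed E) (hKE : Disjoint K E) :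
    ∃ b ∈ B, K ⊆ b ∧ Disjoint b E := by
  refine hE.isCompact.induction_on (p := fun E => ∃ b ∈ B, K ⊆ b ∧ Disjoint b E)
    ⟨univ, hB.univ_mem, subset_univ _, disjoint_empty _⟩ ?_ ?_ ?_
  · rintro s t hst ⟨b, hb, hKb, hbt⟩
    exact ⟨b, hb, hKb, hbt.mono_right hst⟩
  · rintro s t ⟨b, hb, hKb, hbs⟩ ⟨c, hc, hKc, hct⟩
    exact ⟨b ∩ c, hB.inter_mem b hb c hc, subset_inter hKb hKc,
      (hbs.mono_left inter_subset_left).union_right (hct.mono_left inter_subset_right)⟩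
  · intro x hx
    obtain ⟨b, hb, hKb, hxb⟩ := hB.exists_superset_notMem K hK x (Set.disjoint_right.1 hKE hx)
    exact ⟨bᶜ, mem_nhdsWithin_of_mem_nhds ((hB.isClosed b hb).isOpen_compl.mem_nhds hxb),
      b, hb, hKb, disjoint_compl_right⟩

theorem IsChicane.exists_mem_of_isClosedBase (hB : IsClosedBase B) {C D F G P R Q : Set Y}
    (h : IsChicane C D F G P R Q) (hF : IsClosed F) (hG : IsClosed G) (hP : IsClosed P)
    (hR : IsClosed R) (hQ : IsClosed Q) :
    ∃ P' ∈ B, ∃ R' ∈ B, ∃ Q' ∈ B, IsChicane C D F G P' R' Q' := by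
  obtain ⟨hCP, hDQ, hPQ, hPRG, hRQF, hcover⟩ := h
  obtain ⟨P', hP', hPP', hdisjP⟩ := hB.exists_superset_disjoint hP (hQ.union (hR.inter hG))
    (by grind)
  have hP'c := hB.isClosed P' hP'
  obtain ⟨R', hR', hRR', hdisjR⟩ := hB.exists_superset_disjoint hR
    ((hP'c.inter hG).union (hQ.inter hF)) (by grind)
  have hR'c := hB.isClosed R' hR'
  obtain ⟨Q', hQ', hQQ', hdisjQ⟩ := hB.exists_superset_disjoint hQ
    (hP'c.union (hR'c.inter hF)) (by grind)
  refine ⟨P', hP', R', hR', Q', hQ', hCP.trans hPP', hDQ.trans hQQ', ?_, ?_, ?_, ?_⟩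
  · exact (hdisjQ.mono_right subset_union_left).symm
  · grind
  · grind
  · exact eq_univ_of_univ_subset
      (hcover ▸ union_subset_union (union_subset_union hPP' hRR') hQQ')

theorem IsPliandFoursome.exists_mem_of_isClosedBase (hB : IsClosedBase B) {C D F G : Set Y}
    (h : IsPliandFoursome C D F G) (hC : IsClosed C) (hD : IsClosed D) (hF : IsClosed F)
    (hG : IsClosed G) :
    ∃ C' ∈ B, ∃ D' ∈ B, ∃ F' ∈ B, ∃ G' ∈ B, IsPliandFoursome C' D' F' G' ∧
      C ⊆ C' ∧ D ⊆ D' ∧ F ⊆ F' ∧ G ⊆ G' := by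
  obtain ⟨hCD, hCF, hDG⟩ := h
  obtain ⟨C', hC', hCC', hdisjC⟩ := hB.exists_superset_disjoint hC (hD.union hF)
    (hCD.union_right hCF)
  rw [disjoint_union_right] at hdisjC
  have hC'c := hB.isClosed C' hC'
  obtain ⟨D', hD', hDD', hdisjD⟩ := hB.exists_superset_disjoint hD (hC'c.union hG)
    (hdisjC.1.symm.union_right hDG)
  rw [disjoint_union_right] at hdisjD
  obtain ⟨F', hF', hFF', hdisjF⟩ := hB.exists_superset_disjoint hF hC'c hdisjC.2.symm
  obtain ⟨G', hG', hGG', hdisjG⟩ := hB.exists_superset_disjoint hG (hB.isClosed D' hD')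
    hdisjD.2.symm
  exact ⟨C', hC', D', hD', F', hF', G', hG', ⟨hdisjD.1.symm, hdisjF.symm, hdisjG.symm⟩,
    hCC', hDD', hFF', hGG'⟩

theorem IsClosedBase.isCrooked_iff (hB : IsClosedBase B) :
    IsCrooked B ↔ IsCrooked {A : Set Y | IsClosed A} := by
  constructor
  · intro h C hC D hD F hF G hG hp
    obtain ⟨C', hC', D', hD', F', hF', G', hG', hp', hCC', hDD', hFF', hGG'⟩ :=
      hp.exists_mem_of_isClosedBase hB hC hD hF hG
    obtain ⟨P, hP, R, hR, Q, hQ, hCP, hDQ, hPQ, hPRG, hRQF, hcover⟩ := h hC' hD' hF' hG' hp'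
    exact ⟨P, hB.isClosed P hP, R, hB.isClosed R hR, Q, hB.isClosed Q hQ, hCC'.trans hCP,
      hDD'.trans hDQ, hPQ, hPRG.mono_right hGG', hRQF.mono_right hFF', hcover⟩
  · intro h C hC D hD F hF G hG hp
    obtain ⟨P, hP, R, hR, Q, hQ, hchic⟩ := h (hB.isClosed C hC) (hB.isClosed D hD)
      (hB.isClosed F hF) (hB.isClosed G hG) hp
    exact hchic.exists_mem_of_isClosedBase hB (hB.isClosed F hF) (hB.isClosed G hG) hP hR hQ

end ClosedBase

section Wallman

variable {α : Type*} {F : Set (Set α)}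

/-- A bounded lattice of subsets of `α` that is disjunctive (a member not contained in `b`
contains a nonempty member disjoint from `b`) and normal (disjoint members are separated by the
complements of two members). -/
structure IsNormalDisjunctiveLattice (F : Set (Set α)) : Prop where
  univ_mem : univ ∈ F
  empty_mem : ∅ ∈ F
  inter_mem : ∀ a ∈ F, ∀ b ∈ F, a ∩ b ∈ F
  union_mem : ∀ a ∈ F, ∀ b ∈ F, a ∪ b ∈ F
  disjunctive : ∀ a ∈ F, ∀ b ∈ F, ¬ a ⊆ b → ∃ c ∈ F, c.Nonempty ∧ c ⊆ a ∧ Disjoint c b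
  normal : ∀ a ∈ F, ∀ b ∈ F, Disjoint a b →
    ∃ c ∈ F, ∃ d ∈ F, Disjoint a c ∧ Disjoint b d ∧ c ∪ d = univ

namespace LUltra

theorem nonempty_of_mem (u : LUltra F) {a : Set α} (ha : a ∈ u.sets) : a.Nonempty :=
  nonempty_iff_ne_empty.2 (ne_of_mem_of_not_mem ha u.empty_notMem)

theorem iInter_mem (u : LUltra F) {ι : Type*} [Finite ι] {a : ι → Set α}
    (ha : ∀ i, a i ∈ u.sets) : ⋂ i, a i ∈ u.sets := by
  cases nonempty_fintype ι
  simpa using Finset.inf_mem u.sets u.univ_mem u.inter_mem Finset.univ a fun i _ => ha i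

theorem eq_of_sets_subset {u v : LUltra F} (h : u.sets ⊆ v.sets) : u = v := by
  have hsets : u.sets = v.sets := by
    refine h.antisymm fun a ha => ?_
    by_contra hau
    obtain ⟨b, hb, hab⟩ := u.ultra a (v.sets_subset ha) hau
    exact v.empty_notMem (hab ▸ v.inter_mem a ha b (h hb))
  cases u
  cases v
  congr

theorem exists_point_mem_iff (u : LUltra F) {ι : Type*} [Finite ι] {a : ι → Set α}
    (ha : ∀ i, a i ∈ F) : ∃ x, ∀ i, x ∈ a i ↔ a i ∈ u.sets := by
  have hwitness (i : ι) : ∃ c ∈ u.sets, ∀ x ∈ c, x ∈ a i ↔ a i ∈ u.sets := by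
    by_cases hi : a i ∈ u.sets
    · exact ⟨a i, hi, fun x hx => by simp only [hx, hi]⟩
    · obtain ⟨c, hc, hdisj⟩ := u.ultra (a i) (ha i) hi
      exact ⟨c, hc, fun x hx => iff_of_false (fun hxa => (hdisj.subset ⟨hxa, hx⟩).elim) hi⟩
  choose c hc hca using hwitness
  obtain ⟨x, hx⟩ := u.nonempty_of_mem (u.iInter_mem hc)
  exact ⟨x, fun i => hca i x (mem_iInter.1 hx i)⟩

/-- The point of the Wallman space to which an ultrafilter on `α` converges: the members of `F`
that meet every member of `F` in the ultrafilter. -/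
def ofUltrafilter (hF : IsNormalDisjunctiveLattice F) (𝒰 : Ultrafilter α) : LUltra F where
  sets := {a ∈ F | ∀ b ∈ F, b ∈ 𝒰 → (a ∩ b).Nonempty}
  sets_subset _ ha := ha.1
  univ_mem := ⟨hF.univ_mem, fun _ _ hb => by simpa using 𝒰.nonempty_of_mem hb⟩
  empty_notMem h := by simpa using h.2 univ hF.univ_mem Filter.univ_mem
  inter_mem := by
    rintro a ⟨ha, ha𝒰⟩ a' ⟨ha', ha𝒰'⟩
    refine ⟨hF.inter_mem a ha a' ha', fun b hb hb𝒰 => ?_⟩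
    by_contra hempty
    rw [inter_assoc, ← Set.not_disjoint_iff_nonempty_inter, not_not] at hempty
    obtain ⟨c, hc, d, hd, hac, hbd, hcd⟩ := hF.normal a ha _ (hF.inter_mem a' ha' b hb) hempty
    rcases Ultrafilter.union_mem_iff.1 (hcd ▸ Filter.univ_mem : c ∪ d ∈ 𝒰) with hc𝒰 | hd𝒰
    · exact Set.not_disjoint_iff_nonempty_inter.2 (ha𝒰 c hc hc𝒰) hac
    · have hmeet := ha𝒰' (b ∩ d) (hF.inter_mem b hb d hd) (Filter.inter_mem hb𝒰 hd𝒰)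
      rw [← inter_assoc] at hmeet
      exact Set.not_disjoint_iff_nonempty_inter.2 hmeet hbd
  superset_mem a ha b hb hab :=
    ⟨hb, fun c hc hc𝒰 => (ha.2 c hc hc𝒰).mono (inter_subset_inter_left _ hab)⟩
  ultra a ha hnot := by
    simp only [mem_sep_iff, ha, true_and, not_forall, not_nonempty_iff_eq_empty] at hnot
    obtain ⟨b, hb, hb𝒰, hab⟩ := hnot
    exact ⟨b, ⟨hb, fun c _ hc𝒰 => 𝒰.nonempty_of_mem (Filter.inter_mem hb𝒰 hc𝒰)⟩, hab⟩

theorem mem_ofUltrafilter (hF : IsNormalDisjunctiveLattice F) {𝒰 : Ultrafilter α} {a : Set α} :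
    a ∈ (ofUltrafilter hF 𝒰).sets ↔ a ∈ F ∧ ∀ b ∈ F, b ∈ 𝒰 → (a ∩ b).Nonempty :=
  Iff.rfl

theorem ofUltrafilter_surjective (hF : IsNormalDisjunctiveLattice F) :
    Function.Surjective (ofUltrafilter hF) := by
  intro u
  have hne : (Filter.generate u.sets).NeBot := by
    refine Filter.generate_neBot_iff.2 fun t ht htfin => ?_
    have := htfin.to_subtype
    rw [sInter_eq_iInter]
    exact u.nonempty_of_mem (u.iInter_mem fun a : t => ht a.2)
  have hle (a : Set α) (ha : a ∈ u.sets) : a ∈ Ultrafilter.of (Filter.generate u.sets) :=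
    Ultrafilter.of_le _ (Filter.mem_generate_of_mem ha)
  have hsub : u.sets ⊆ (ofUltrafilter hF (Ultrafilter.of (Filter.generate u.sets))).sets :=
    fun a ha => ⟨u.sets_subset ha, fun b _ hb =>
      Ultrafilter.nonempty_of_mem (Filter.inter_mem (hle a ha) hb)⟩
  exact ⟨_, (eq_of_sets_subset hsub).symm⟩

theorem continuous_ofUltrafilter (hF : IsNormalDisjunctiveLattice F) :
    Continuous (ofUltrafilter hF) := by
  refine continuous_generateFrom_iff.2 ?_
  rintro _ ⟨a, ha, rfl⟩
  have hpreimage : ofUltrafilter hF ⁻¹' {u | a ∈ u.sets}ᶜ =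
      ⋃ b ∈ {b ∈ F | ¬(a ∩ b).Nonempty}, {𝒰 | b ∈ 𝒰} := by
    ext 𝒰
    simp only [mem_preimage, mem_compl_iff, mem_ofPred_eq, mem_ofUltrafilter, ha, true_and,
      not_forall, mem_iUnion, exists_prop]
    grind
  rw [hpreimage]
  exact isOpen_biUnion fun b _ => ultrafilter_isOpen_basic b

theorem compactSpace (hF : IsNormalDisjunctiveLattice F) : CompactSpace (LUltra F) :=
  (ofUltrafilter_surjective hF).compactSpace (continuous_ofUltrafilter hF)

theorem exists_lUltra_mem_sets_iff (hF : IsNormalDisjunctiveLattice F) {ι : Type*} [Finite ι]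
    {a : ι → Set α} (ha : ∀ i, a i ∈ F) (x : α) : ∃ u : LUltra F, ∀ i, a i ∈ u.sets ↔ x ∈ a i := by
  classical
  cases nonempty_fintype ι
  let A := ⋂ i ∈ ({i | x ∈ a i} : Finset ι), a i
  let B := ⋃ i ∈ ({i | x ∉ a i} : Finset ι), a i
  have hA : A ∈ F := by
    simpa only [A, Finset.inf_set_eq_iInter] using
      Finset.inf_mem F hF.univ_mem hF.inter_mem _ a fun i _ => ha i
  have hB : B ∈ F := by
    simpa only [B, Finset.sup_set_eq_biUnion] using
      Finset.sup_mem F hF.empty_mem hF.union_mem _ a fun i _ => ha i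
  have hAB : ¬A ⊆ B := fun h => by simpa [A, B] using @h x
  obtain ⟨c, hc, ⟨y, hy⟩, hcA, hcB⟩ := hF.disjunctive A hA B hB hAB
  refine ⟨ofUltrafilter hF (pure y), fun i => ?_⟩
  simp only [mem_ofUltrafilter, ha i, true_and, Ultrafilter.mem_pure]
  by_cases hi : x ∈ a i
  · have hyi : y ∈ a i := by simpa [A, hi] using mem_iInter₂.1 (hcA hy) i
    exact iff_of_true (fun b _ hyb => ⟨y, hyi, hyb⟩) hi
  · have hdisj : Disjoint c (a i) :=
      hcB.mono_right (subset_biUnion_of_mem (u := a) (by simpa using hi))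
    exact iff_of_false (fun h => Set.not_disjoint_iff_nonempty_inter.2 (h c hc hy) hdisj.symm) hi

theorem forall_pattern_iff (hF : IsNormalDisjunctiveLattice F) {ι : Type*} [Finite ι]
    (φ : (ι → Prop) → Prop) {a : ι → Set α} (ha : ∀ i, a i ∈ F) :
    (∀ u : LUltra F, φ fun i => a i ∈ u.sets) ↔ ∀ x, φ fun i => x ∈ a i := by
  constructor
  · intro h x
    obtain ⟨u, hu⟩ := exists_lUltra_mem_sets_iff hF ha x
    simpa only [hu] using h u
  · intro h u
    obtain ⟨x, hx⟩ := u.exists_point_mem_iff ha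
    simpa only [hx] using h x

/-- The basic closed set of the Wallman space of `F` given by a member of `F`. -/
def hat (F : Set (Set α)) (a : Set α) : Set (LUltra F) :=
  {u | a ∈ u.sets}

theorem isClosed_hat {a : Set α} (ha : a ∈ F) : IsClosed (hat F a) :=
  ⟨isOpen_generateFrom_of_mem ⟨a, ha, rfl⟩⟩

theorem t2Space (hF : IsNormalDisjunctiveLattice F) : T2Space (LUltra F) := by
  refine ⟨fun u v huv => ?_⟩
  obtain ⟨a, ha, hav⟩ := not_subset.1 (mt eq_of_sets_subset huv)
  obtain ⟨b, hb, hab⟩ := v.ultra a (u.sets_subset ha) hav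
  obtain ⟨c, hc, d, hd, hac, hbd, hcd⟩ := hF.normal a (u.sets_subset ha) b (v.sets_subset hb)
    (Set.disjoint_iff_inter_eq_empty.2 hab)
  have hdisjoint {w : LUltra F} {e f : Set α} (he : e ∈ w.sets) (hef : Disjoint e f) :
      f ∉ w.sets := fun hf =>
    Set.not_disjoint_iff_nonempty_inter.2 (w.nonempty_of_mem (w.inter_mem e he f hf)) hef
  refine ⟨(hat F c)ᶜ, (hat F d)ᶜ, (isClosed_hat hc).isOpen_compl, (isClosed_hat hd).isOpen_compl,
    hdisjoint ha hac, hdisjoint hb hbd, disjoint_compl_left_iff_subset.2 fun w hwd => ?_⟩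
  obtain ⟨x, hx⟩ := w.exists_point_mem_iff (a := ![c, d])
    (by simp [Fin.forall_fin_succ, hc, hd])
  simp only [Fin.forall_fin_two, Matrix.cons_val_zero, Matrix.cons_val_one] at hx
  exact hx.1.1 ((hcd ▸ mem_univ x : x ∈ c ∪ d).resolve_right (mt hx.2.1 hwd))

theorem hat_univ : hat F univ = univ :=
  eq_univ_of_forall fun u => u.univ_mem

theorem hat_empty : hat F ∅ = ∅ :=
  eq_empty_of_forall_notMem fun u => u.empty_notMem

theorem hat_inter (hF : IsNormalDisjunctiveLattice F) {a b : Set α} (ha : a ∈ F) (hb : b ∈ F) :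
    hat F (a ∩ b) = hat F a ∩ hat F b := by
  ext u
  obtain ⟨x, hx⟩ := u.exists_point_mem_iff (a := ![a, b, a ∩ b])
    (by simp [Fin.forall_fin_succ, ha, hb, hF.inter_mem])
  exact (hx 2).symm.trans (and_congr (hx 0) (hx 1))

theorem hat_union (hF : IsNormalDisjunctiveLattice F) {a b : Set α} (ha : a ∈ F) (hb : b ∈ F) :
    hat F (a ∪ b) = hat F a ∪ hat F b := by
  ext u
  obtain ⟨x, hx⟩ := u.exists_point_mem_iff (a := ![a, b, a ∪ b])
    (by simp [Fin.forall_fin_succ, ha, hb, hF.union_mem])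
  exact (hx 2).symm.trans (or_congr (hx 0) (hx 1))

theorem isTopologicalBasis_compl_hat (hF : IsNormalDisjunctiveLattice F) :
    IsTopologicalBasis {s | ∃ a ∈ F, s = (hat F a)ᶜ} where
  exists_subset_inter := by
    rintro _ ⟨a, ha, rfl⟩ _ ⟨b, hb, rfl⟩ u hu
    rw [← compl_union, ← hat_union hF ha hb] at hu ⊢
    exact ⟨_, ⟨a ∪ b, hF.union_mem a ha b hb, rfl⟩, hu, subset_rfl⟩
  sUnion_eq := eq_univ_of_univ_subset
    (subset_sUnion_of_mem ⟨∅, hF.empty_mem, by rw [hat_empty, compl_empty]⟩)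
  eq_generateFrom := rfl

theorem isClosedBase_hat (hF : IsNormalDisjunctiveLattice F) : IsClosedBase (hat F '' F) where
  isClosed := forall_mem_image.2 fun _ => isClosed_hat
  univ_mem := ⟨univ, hF.univ_mem, hat_univ⟩
  inter_mem := by
    rintro _ ⟨a, ha, rfl⟩ _ ⟨b, hb, rfl⟩
    exact ⟨a ∩ b, hF.inter_mem a ha b hb, hat_inter hF ha hb⟩
  exists_superset_notMem K hK u hu := by
    obtain ⟨_, ⟨a, ha, rfl⟩, hua, haK⟩ :=
      (isTopologicalBasis_compl_hat hF).exists_subset_of_mem_open hu hK.isOpen_compl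
    exact ⟨hat F a, mem_image_of_mem _ ha, compl_subset_compl.1 haK, hua⟩

theorem isCrooked_hat_iff (hF : IsNormalDisjunctiveLattice F) :
    IsCrooked (hat F '' F) ↔ IsCrooked F := by
  have hchicane {a : Fin 4 → Set α} {b : Fin 3 → Set α} (ha : ∀ i, a i ∈ F) (hb : ∀ j, b j ∈ F) :=
    forall_pattern_iff hF (fun p => ChicanePattern (fun i => p (.inl i)) fun j => p (.inr j))
      (a := Sum.elim a b) (Sum.forall.2 ⟨ha, hb⟩)
  simp only [isCrooked_iff_forall_pattern]
  constructor
  · intro h a ha hp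
    obtain ⟨b, hb, hchic⟩ := h (fun i => hat F (a i)) (fun i => mem_image_of_mem _ (ha i))
      ((forall_pattern_iff hF PliandPattern ha).2 hp)
    choose b' hb' hbb' using hb
    obtain rfl : (fun j => hat F (b' j)) = b := funext hbb'
    exact ⟨b', hb', (hchicane ha hb').1 hchic⟩
  · intro h a ha hp
    choose a' ha' haa' using ha
    obtain rfl : (fun i => hat F (a' i)) = a := funext haa'
    obtain ⟨b, hb, hchic⟩ := h a' ha' ((forall_pattern_iff hF PliandPattern ha').1 hp)
    exact ⟨fun j => hat F (b j), fun j => mem_image_of_mem _ (hb j), (hchicane ha' hb).2 hchic⟩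

theorem hereditarilyIndecomposable_iff_isCrooked (hF : IsNormalDisjunctiveLattice F) :
    HereditarilyIndecomposable (LUltra F) ↔ IsCrooked F := by
  have := compactSpace hF
  have := t2Space hF
  rw [_root_.hereditarilyIndecomposable_iff_isCrooked, ← (isClosedBase_hat hF).isCrooked_iff,
    isCrooked_hat_iff hF]

end LUltra

end Wallman

section Definability

variable {L : Language} {N : Type*} [L.Structure N]

theorem definable_pattern {A : Set N} {α ι : Type*} [Finite ι] (φ : (ι → Prop) → Prop)
    {s : ι → Set (α → N)} (hs : ∀ i, A.Definable L (s i)) :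
    A.Definable L {v | φ fun i => v ∈ s i} := by
  have hpattern : {v | φ fun i => v ∈ s i} =
      ⋃ p : {p : ι → Prop // φ p}, ⋂ i, {v | v ∈ s i ↔ p.1 i} := by
    ext v
    simp only [mem_ofPred_eq, mem_iUnion, mem_iInter]
    constructor
    · intro hv
      exact ⟨⟨_, hv⟩, fun i => Iff.rfl⟩
    · rintro ⟨⟨p, hp⟩, hvp⟩
      rwa [funext fun i => propext (hvp i)]
  rw [hpattern]
  refine definable_iUnion_of_finite fun p => definable_iInter_of_finite fun i => ?_
  by_cases hpi : p.1 i
  · simpa [hpi] using hs i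
  · simpa [hpi, compl_def] using (hs i).compl

theorem definable_sumElim_mem {A : Set N} {α β : Type*} [Finite α] [Finite β]
    {s : Set (α ⊕ β → N)} (hs : A.Definable L s) {a : α → N} (ha : ∀ i, a i ∈ A) :
    A.Definable L {b | Sum.elim a b ∈ s} := by
  have hmap : A.DefinableMap L fun b : β → N => Sum.elim a b := by
    rintro (i | j)
    · exact (L.definableFun_const β (ha i))
    · exact .proj L
  exact hs.preimage_map hmap

/-- The Tarski–Vaught property for tuples. -/
theorem exists_mem_of_definable_elementarySubstructure (S : L.ElementarySubstructure N)
    {β : Type*} [Finite β] {s : Set (β → N)} (hs : (S : Set N).Definable L s)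
    (hne : s.Nonempty) : ∃ b ∈ s, ∀ i, b i ∈ S := by
  obtain ⟨φ, rfl⟩ := definable_iff_exists_formula_sum.1 hs
  have hφ : (φ.iExs β).Realize (S.subtype ∘ (id : S → S)) :=
    Language.Formula.realize_iExs.2 hne
  rw [S.subtype.map_formula, Language.Formula.realize_iExs] at hφ
  obtain ⟨b, hb⟩ := hφ
  rw [← S.subtype.map_formula, Sum.comp_elim] at hb
  exact ⟨S.subtype ∘ b, hb, fun i => (b i).2⟩

end Definability

section HeredLt

variable {κ : Cardinal.{1}} {x y : ZFSet.{0}}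

theorem heredLt_iff : HeredLt κ x ↔ Cardinal.mk x.toSet < κ ∧ ∀ y ∈ x, HeredLt κ y := by
  unfold HeredLt
  rw [WellFounded.fix_eq]

theorem HeredLt.mem (hx : HeredLt κ x) (hy : y ∈ x) : HeredLt κ y :=
  (heredLt_iff.1 hx).2 y hy

theorem HeredLt.subset (hx : HeredLt κ x) (hyx : y ⊆ x) : HeredLt κ y :=
  heredLt_iff.2 ⟨(Cardinal.mk_le_mk_of_subset fun _ hz => hyx hz).trans_lt (heredLt_iff.1 hx).1,
    fun _ hz => hx.mem (hyx hz)⟩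

theorem definable_mem {A : Set (HKappa κ)} {α : Type*} {f g : (α → HKappa κ) → HKappa κ}
    (hf : A.DefinableFun Language.graph f) (hg : A.DefinableFun Language.graph g) :
    A.Definable Language.graph {v | (f v : ZFSet) ∈ (g v : ZFSet)} := by
  let φ : Language.graph.Formula (Fin 2) := Language.adj.formula₂ (.var 0) (.var 1)
  have hmem : A.Definable Language.graph
      {w : Fin 2 → HKappa κ | (w 0 : ZFSet) ∈ (w 1 : ZFSet)} := by
    refine (empty_definable_iff.2 ⟨φ, ?_⟩).mono (empty_subset A)
    ext w
    exact (Language.Formula.realize_rel₂ (L := Language.graph) (M := HKappa κ) (R := Language.adj)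
      (t₁ := .var 0) (t₂ := .var 1)).symm
  have hmap : A.DefinableMap Language.graph fun v => ![f v, g v] := by
    simp [DefinableMap, Fin.forall_fin_two, hf, hg]
  exact hmem.preimage_map hmap

theorem definable_subset {A : Set (HKappa κ)} {α : Type*} {f g : (α → HKappa κ) → HKappa κ}
    (hf : A.DefinableFun Language.graph f) (hg : A.DefinableFun Language.graph g) :
    A.Definable Language.graph {v | (f v : ZFSet) ⊆ (g v : ZFSet)} := by
  have hpoint : A.Definable Language.graph {w : Fin 2 ⊕ Unit → HKappa κ |
      (w (.inr ()) : ZFSet) ∈ (w (.inl 0) : ZFSet) →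
        (w (.inr ()) : ZFSet) ∈ (w (.inl 1) : ZFSet)} := by
    simp only [imp_iff_not_or]
    exact (definable_mem (by fun_prop) (by fun_prop)).compl.union
      (definable_mem (by fun_prop) (by fun_prop))
  have hsubset : A.Definable Language.graph
      {w : Fin 2 → HKappa κ | (w 0 : ZFSet) ⊆ (w 1 : ZFSet)} := by
    convert hpoint.forall_of_finite using 1
    ext w
    exact ⟨fun h u hu => h hu, fun h z hz => h (fun _ => ⟨z, HeredLt.mem (w 0).2 hz⟩) hz⟩
  have hmap : A.DefinableMap Language.graph fun v => ![f v, g v] := by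
    simp [DefinableMap, Fin.forall_fin_two, hf, hg]
  exact hsubset.preimage_map hmap

end HeredLt

section Codes

variable {X : ZFSet.{0}}

theorem decodeSet_codeSet (A : Set ↥X.toSet) : decodeSet X (codeSet X A) = A := by
  ext p
  simp only [decodeSet, codeSet, mem_ofPred_eq, ZFSet.mem_sep]
  exact ⟨fun ⟨_, _, hp⟩ => hp, fun hp => ⟨p.2, p.2, hp⟩⟩

theorem codeSet_subset (A : Set ↥X.toSet) : codeSet X A ⊆ X :=
  fun _ hy => (ZFSet.mem_sep.1 hy).1

theorem codeSet_mem_hKappa {κ : Cardinal.{1}} (hX : X ∈ HKappa κ) (A : Set ↥X.toSet) :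
    codeSet X A ∈ HKappa κ :=
  HeredLt.subset hX (codeSet_subset A)

theorem codeSet_decodeSet {t : ZFSet.{0}} (ht : t ⊆ X) : codeSet X (decodeSet X t) = t := by
  ext y
  simp only [decodeSet, codeSet, mem_ofPred_eq, ZFSet.mem_sep]
  exact ⟨fun ⟨_, _, hy⟩ => hy, fun hy => ⟨ht hy, ht hy, hy⟩⟩

theorem decodeSet_sumElim {κ : Cardinal.{1}} {ι β : Type*} (v : ι → HKappa κ)
    (u : β → HKappa κ) : (fun i => decodeSet X (Sum.elim v u i : HKappa κ)) =
      Sum.elim (fun i => decodeSet X (v i)) fun j => decodeSet X (u j) :=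
  Sum.comp_elim (fun t : HKappa κ => decodeSet X t) v u

theorem mem_opensZ [TopologicalSpace ↥X.toSet] {t : ZFSet.{0}} :
    t ∈ opensZ X ↔ t ⊆ X ∧ IsOpen (decodeSet X t) := by
  rw [opensZ, ZFSet.mem_sep, ZFSet.mem_powerset]

variable {κ : Cardinal.{1}} {M : Language.graph.ElementarySubstructure (HKappa κ)}

/-- Definability over `M`, in `H(κ)`, of a set of tuples of subsets of `X` through codes: the
tuples of elements of `H(κ)` that decode to a tuple in the set form a definable set. -/
def CodeDefinable (M : Language.graph.ElementarySubstructure (HKappa κ)) {ι : Type*}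
    (Q : Set (ι → Set ↥X.toSet)) : Prop :=
  (M : Set (HKappa κ)).Definable Language.graph {v | (fun i => decodeSet X (v i)) ∈ Q}

theorem CodeDefinable.compl {ι : Type*} {Q : Set (ι → Set ↥X.toSet)} (hQ : CodeDefinable M Q) :
    CodeDefinable M Qᶜ :=
  Definable.compl hQ

theorem CodeDefinable.inter {ι : Type*} {Q R : Set (ι → Set ↥X.toSet)} (hQ : CodeDefinable M Q)
    (hR : CodeDefinable M R) : CodeDefinable M (Q ∩ R) :=
  Definable.inter hQ hR

theorem codeDefinable_forall_pattern (hXM : MemOf κ M X) {ι : Type*} [Finite ι]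
    (φ : (ι → Prop) → Prop) :
    CodeDefinable M {A : ι → Set ↥X.toSet | ∀ x, φ fun i => x ∈ A i} := by
  obtain ⟨hX, hXM⟩ := hXM
  have hpoint : (M : Set (HKappa κ)).Definable Language.graph {w : ι ⊕ Unit → HKappa κ |
      (w (.inr ()) : ZFSet) ∈ X → φ fun i => (w (.inr ()) : ZFSet) ∈ (w (.inl i) : ZFSet)} := by
    have hX' := Language.graph.definableFun_const (ι ⊕ Unit) (A := (M : Set (HKappa κ))) hXM
    simp only [imp_iff_not_or]
    exact (definable_mem (by fun_prop) hX').compl.union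
      (definable_pattern φ fun i => definable_mem (by fun_prop) (by fun_prop))
  unfold CodeDefinable
  convert hpoint.forall_of_finite using 1
  ext v
  exact ⟨fun h u hu => h ⟨u (), hu⟩, fun h x => h (fun _ => ⟨x, HeredLt.mem hX x.2⟩) x.2⟩

variable [TopologicalSpace ↥X.toSet]

theorem definable_isClosed_decodeSet (hXM : MemOf κ M X) (htopM : MemOf κ M (opensZ X))
    {ι : Type*} (i : ι) : (M : Set (HKappa κ)).Definable Language.graph
      {v : ι → HKappa κ | IsClosed (decodeSet X (v i))} := by
  obtain ⟨hT, hTM⟩ := htopM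
  have hcompl := codeDefinable_forall_pattern hXM
    fun p : Unit ⊕ Unit → Prop => p (.inr ()) ↔ ¬p (.inl ())
  have hopen : (M : Set (HKappa κ)).Definable Language.graph
      {w : Unit ⊕ Unit → HKappa κ | (w (.inr ()) : ZFSet) ∈ opensZ X} :=
    definable_mem (by fun_prop)
      (Language.graph.definableFun_const (Unit ⊕ Unit) (A := (M : Set (HKappa κ))) hTM)
  have hclosed : (M : Set (HKappa κ)).Definable Language.graph
      {v : Unit → HKappa κ | IsClosed (decodeSet X (v ()))} := by
    convert (hopen.inter hcompl).exists_of_finite using 1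
    ext v
    constructor
    · intro hv
      exact ⟨fun _ => ⟨codeSet X (decodeSet X (v ()))ᶜ, codeSet_mem_hKappa hXM.1 _⟩,
        mem_opensZ.2 ⟨codeSet_subset _, (decodeSet_codeSet _).symm ▸ hv.isOpen_compl⟩,
        Set.ext_iff.1 (decodeSet_codeSet (decodeSet X (v ()))ᶜ)⟩
    · rintro ⟨u, hu, huv⟩
      have hcompl_eq : decodeSet X (u ()) = (decodeSet X (v ()))ᶜ := ext huv
      exact ⟨hcompl_eq ▸ (mem_opensZ.1 hu).2⟩
  exact hclosed.preimage_comp fun _ => i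

theorem CodeDefinable.exists_isClosed (hXM : MemOf κ M X) (htopM : MemOf κ M (opensZ X))
    {ι β : Type*} [Finite β] {Q : Set (ι ⊕ β → Set ↥X.toSet)} (hQ : CodeDefinable M Q) :
    CodeDefinable M {A : ι → Set ↥X.toSet |
      ∃ B : β → Set ↥X.toSet, (∀ j, IsClosed (B j)) ∧ Sum.elim A B ∈ Q} := by
  have hclosed : (M : Set (HKappa κ)).Definable Language.graph
      (⋂ j, {w : ι ⊕ β → HKappa κ | IsClosed (decodeSet X (w (.inr j)))}) :=
    definable_iInter_of_finite fun j => definable_isClosed_decodeSet hXM htopM (Sum.inr j)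
  unfold CodeDefinable
  convert (hclosed.inter hQ).exists_of_finite using 1
  ext v
  constructor
  · rintro ⟨B, hB, hBQ⟩
    refine ⟨fun j => ⟨codeSet X (B j), codeSet_mem_hKappa hXM.1 _⟩, mem_iInter.2 fun j => ?_, ?_⟩
    · simpa [decodeSet_codeSet] using hB j
    · simpa [decodeSet_sumElim, decodeSet_codeSet] using hBQ
  · rintro ⟨u, hu, huQ⟩
    exact ⟨fun j => decodeSet X (u j), mem_iInter.1 hu, decodeSet_sumElim v u ▸ huQ⟩

theorem CodeDefinable.sumElim_mem {ι β : Type*} [Finite ι] [Finite β]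
    {Q : Set (ι ⊕ β → Set ↥X.toSet)} (hQ : CodeDefinable M Q) {A : ι → Set ↥X.toSet}
    (hA : ∀ i, A i ∈ Lfam X κ M) : CodeDefinable M {B : β → Set ↥X.toSet | Sum.elim A B ∈ Q} := by
  choose a haM using fun i => (hA i).2
  simpa [CodeDefinable, decodeSet_sumElim, decodeSet_codeSet] using definable_sumElim_mem hQ haM

theorem CodeDefinable.exists_mem_lfam (hXM : MemOf κ M X) (htopM : MemOf κ M (opensZ X))
    {β : Type*} [Finite β] {Q : Set (β → Set ↥X.toSet)} (hQ : CodeDefinable M Q)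
    (hne : ∃ B, (∀ j, IsClosed (B j)) ∧ B ∈ Q) : ∃ B, (∀ j, B j ∈ Lfam X κ M) ∧ B ∈ Q := by
  have hcode := definable_iInter_of_finite fun j : β =>
    (definable_subset (.proj Language.graph (i := j))
      (Language.graph.definableFun_const β hXM.2)).inter
      (definable_isClosed_decodeSet hXM htopM j)
  obtain ⟨B, hB, hBQ⟩ := hne
  obtain ⟨t, ⟨ht, htQ⟩, htM⟩ := exists_mem_of_definable_elementarySubstructure M
    (hcode.inter hQ) ⟨fun j => ⟨codeSet X (B j), codeSet_mem_hKappa hXM.1 (B j)⟩,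
      mem_iInter.2 fun j => ⟨codeSet_subset _, by simpa [decodeSet_codeSet] using hB j⟩,
      by simpa [decodeSet_codeSet] using hBQ⟩
  refine ⟨fun j => decodeSet X (t j), fun j => ?_, htQ⟩
  obtain ⟨htX, htcl⟩ := mem_iInter.1 ht j
  exact ⟨htcl, (codeSet_decodeSet htX).symm ▸ ⟨(t j).2, htM j⟩⟩

theorem exists_mem_lfam_of_forall_pattern (hXM : MemOf κ M X) (htopM : MemOf κ M (opensZ X))
    {ι β : Type*} [Finite ι] [Finite β] (φ : (ι → Prop) → (β → Prop) → Prop)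
    {A : ι → Set ↥X.toSet} (hA : ∀ i, A i ∈ Lfam X κ M)
    (hne : ∃ B : β → Set ↥X.toSet,
      (∀ j, IsClosed (B j)) ∧ ∀ x, φ (fun i => x ∈ A i) fun j => x ∈ B j) :
    ∃ B : β → Set ↥X.toSet,
      (∀ j, B j ∈ Lfam X κ M) ∧ ∀ x, φ (fun i => x ∈ A i) fun j => x ∈ B j :=
  ((codeDefinable_forall_pattern hXM fun p : ι ⊕ β → Prop =>
    φ (fun i => p (.inl i)) fun j => p (.inr j)).sumElim_mem hA).exists_mem_lfam hXM htopM hne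

theorem isNormalDisjunctiveLattice_lfam [CompactSpace ↥X.toSet] [T2Space ↥X.toSet]
    (hXM : MemOf κ M X) (htopM : MemOf κ M (opensZ X)) :
    IsNormalDisjunctiveLattice (Lfam X κ M) where
  univ_mem := by
    obtain ⟨B, hB, h⟩ := exists_mem_lfam_of_forall_pattern hXM htopM (ι := Empty) (β := Unit)
      (fun _ q => q ()) (A := Empty.elim) (by simp) ⟨fun _ => univ, by simp⟩
    exact eq_univ_of_forall h ▸ hB ()
  empty_mem := by
    obtain ⟨B, hB, h⟩ := exists_mem_lfam_of_forall_pattern hXM htopM (ι := Empty) (β := Unit)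
      (fun _ q => ¬q ()) (A := Empty.elim) (by simp) ⟨fun _ => ∅, by simp⟩
    exact eq_empty_of_forall_notMem h ▸ hB ()
  inter_mem a ha b hb := by
    obtain ⟨B, hB, h⟩ := exists_mem_lfam_of_forall_pattern hXM htopM (β := Unit)
      (fun p q => q () ↔ p 0 ∧ p 1) (A := ![a, b]) (by simp [Fin.forall_fin_two, ha, hb])
      ⟨fun _ => a ∩ b, fun _ => ha.1.inter hb.1, fun _ => Iff.rfl⟩
    exact (ext h : B () = a ∩ b) ▸ hB ()
  union_mem a ha b hb := by
    obtain ⟨B, hB, h⟩ := exists_mem_lfam_of_forall_pattern hXM htopM (β := Unit)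
      (fun p q => q () ↔ p 0 ∨ p 1) (A := ![a, b]) (by simp [Fin.forall_fin_two, ha, hb])
      ⟨fun _ => a ∪ b, fun _ => ha.1.union hb.1, fun _ => Iff.rfl⟩
    exact (ext h : B () = a ∪ b) ▸ hB ()
  disjunctive a ha b hb hab := by
    obtain ⟨x, hxa, hxb⟩ := not_subset.1 hab
    have hempty : CodeDefinable M {C : Unit → Set ↥X.toSet | ∀ x, x ∉ C ()} :=
      codeDefinable_forall_pattern hXM fun p => ¬p ()
    have hsub : CodeDefinable M {C : Unit → Set ↥X.toSet | ∀ x ∈ C (), x ∈ a ∧ x ∉ b} :=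
      (codeDefinable_forall_pattern hXM fun p : Fin 2 ⊕ Unit → Prop =>
        p (.inr ()) → p (.inl 0) ∧ ¬p (.inl 1)).sumElim_mem
          (A := ![a, b]) (by simp [Fin.forall_fin_two, ha, hb])
    obtain ⟨C, hC, hCne, hCab⟩ := CodeDefinable.exists_mem_lfam hXM htopM
      (hempty.compl.inter hsub)
      ⟨fun _ => {x}, fun _ => isClosed_singleton, by simp, by rintro _ rfl; exact ⟨hxa, hxb⟩⟩
    refine ⟨C (), hC (), ?_, fun y hy => (hCab y hy).1, disjoint_left.2 fun y hy => (hCab y hy).2⟩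
    simpa [Set.Nonempty] using hCne
  normal a ha b hb hab := by
    obtain ⟨U, V, hU, hV, haU, hbV, hUV⟩ := normal_separation ha.1 hb.1 hab
    obtain ⟨B, hB, h⟩ := exists_mem_lfam_of_forall_pattern hXM htopM
      (fun p q : Fin 2 → Prop => ¬(p 0 ∧ q 0) ∧ ¬(p 1 ∧ q 1) ∧ (q 0 ∨ q 1))
      (A := ![a, b]) (by simp [Fin.forall_fin_two, ha, hb])
      ⟨![Uᶜ, Vᶜ], by simp [Fin.forall_fin_two, hU, hV], fun x =>
        ⟨fun hx => hx.2 (haU hx.1), fun hx => hx.2 (hbV hx.1),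
          not_and_or.1 fun hx => disjoint_left.1 hUV hx.1 hx.2⟩⟩
    exact ⟨B 0, hB 0, B 1, hB 1, disjoint_left.2 fun x hxa hx => (h x).1 ⟨hxa, hx⟩,
      disjoint_left.2 fun x hxb hx => (h x).2.1 ⟨hxb, hx⟩, eq_univ_of_forall fun x => (h x).2.2⟩

theorem isCrooked_lfam_iff (hXM : MemOf κ M X) (htopM : MemOf κ M (opensZ X)) :
    IsCrooked (Lfam X κ M) ↔ IsCrooked {A : Set ↥X.toSet | IsClosed A} := by
  simp only [isCrooked_iff_forall_pattern]
  constructor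
  · intro h a ha hp
    by_contra hchic
    have hdef : CodeDefinable M {A : Fin 4 → Set ↥X.toSet |
        ∃ B : Fin 3 → Set ↥X.toSet, (∀ j, IsClosed (B j)) ∧
          ∀ x, ChicanePattern (fun i => x ∈ A i) fun j => x ∈ B j} :=
      (codeDefinable_forall_pattern hXM fun p : Fin 4 ⊕ Fin 3 → Prop =>
        ChicanePattern (fun i => p (.inl i)) fun j => p (.inr j)).exists_isClosed hXM htopM
    obtain ⟨a', ha', hp', hchic'⟩ := CodeDefinable.exists_mem_lfam hXM htopM
      ((codeDefinable_forall_pattern hXM PliandPattern).inter hdef.compl)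
      ⟨a, ha, hp, hchic⟩
    obtain ⟨b, hb, hab⟩ := h a' ha' hp'
    exact hchic' ⟨b, fun j => (hb j).1, hab⟩
  · intro h a ha hp
    exact exists_mem_lfam_of_forall_pattern hXM htopM ChicanePattern ha
      (h a (fun i => (ha i).1) hp)

end Codes

theorem hereditarilyIndecomposable_iff_wallman_general (X : ZFSet.{0})
    [TopologicalSpace ↥X.toSet] [CompactSpace ↥X.toSet] [T2Space ↥X.toSet] (κ : Cardinal.{1})
    (M : FirstOrder.Language.graph.ElementarySubstructure (HKappa κ))
    (hXM : MemOf κ M X) (htopM : MemOf κ M (opensZ X)) :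
    HereditarilyIndecomposable ↥X.toSet ↔
      HereditarilyIndecomposable (LUltra (Lfam X κ M)) :=
  calc
    HereditarilyIndecomposable ↥X.toSet ↔ IsCrooked {A : Set ↥X.toSet | IsClosed A} :=
      hereditarilyIndecomposable_iff_isCrooked
    _ ↔ IsCrooked (Lfam X κ M) := (isCrooked_lfam_iff hXM htopM).symm
    _ ↔ HereditarilyIndecomposable (LUltra (Lfam X κ M)) :=
      (LUltra.hereditarilyIndecomposable_iff_isCrooked
        (isNormalDisjunctiveLattice_lfam hXM htopM)).symm

/-- For a continuum `X` and a countable elementary submodel `M ≺ H(κ)` with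
`X ∈ M`, with `L = 2^X ∩ M`, the continuum `X` is hereditarily indecomposable iff the
Wallman space `wL` is hereditarily indecomposable. -/
theorem hereditarilyIndecomposable_iff_wallman
    (X : ZFSet.{0}) [TopologicalSpace ↥X.toSet] [CompactSpace ↥X.toSet]
    [T2Space ↥X.toSet] [ConnectedSpace ↥X.toSet]
    (κ : Cardinal.{1}) (hreg : κ.IsRegular) (hbig : HeredLt κ X.powerset.powerset)
    (M : FirstOrder.Language.graph.ElementarySubstructure (HKappa κ))
    (hMcount : Countable M) (hXM : MemOf κ M X) (htopM : MemOf κ M (opensZ X)) :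
    HereditarilyIndecomposable ↥X.toSet ↔
      HereditarilyIndecomposable (LUltra (Lfam X κ M)) :=
  hereditarilyIndecomposable_iff_wallman_general X κ M hXM htopM
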